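/- Let E ≠ {0} be a z-invariant linear subspace of Hol(𝔻) with T(E) ⊂ E such that I_E − λT|_E : E → E is bijective for every λ ∈ 𝔻, let M be a nontrivial linear subspace of E, let π : E → E/M be the canonical surjection, and assume M has the division property at some λ ∈ 𝔻, with U_λ : E/M → E/M the onto linear map satisfying U_λ ∘ π ∘ (S|_E − λI_E) = π. Then for μ ∈ 𝔻, M has the division property at μ if and only if the map I_{E/M} − (μ − λ)U_λ is one-to-one; and in this case I_{E/M} − (μ − λ)U_λ is a bijection of E/M and U_μ = U_λ ∘ (I_{E/M} − (μ − λ)U_λ)^{-1}. -/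

import Mathlib

noncomputable section

open Metric Set Filter Topology
open scoped Classical

/-- Functions holomorphic on the open unit disc, normalized to vanish outside it.
This is our model of `Hol(𝔻)`. -/
def HolDisc : Set (ℂ → ℂ) :=
  {f | DifferentiableOn ℂ f (Metric.ball (0:ℂ) 1) ∧ ∀ z ∉ Metric.ball (0:ℂ) 1, f z = 0}

/-- The constant function `1` of `Hol(𝔻)` (normalized to vanish outside the disc). -/
def oneD : ℂ → ℂ := fun z => if z ∈ Metric.ball (0:ℂ) 1 then 1 else 0

/-- The shift `S`, `(Sf)(z) = z f(z)`, as a linear map. -/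
def shiftL : (ℂ → ℂ) →ₗ[ℂ] (ℂ → ℂ) where
  toFun f := fun z => z * f z
  map_add' f g := by funext z; simp [mul_add]
  map_smul' c f := by funext z; simp [smul_eq_mul]; ring

/-- Division: `f_λ(z) = (f(z) - f(λ))/(z - λ)` for `z ≠ λ`, `f_λ(λ) = f'(λ)`,
normalized to vanish outside the disc.  `fdivB 0` is the backward shift `T`. -/
def fdivB (lam : ℂ) (f : ℂ → ℂ) : ℂ → ℂ := fun z =>
  if z ∈ Metric.ball (0:ℂ) 1 then
    (if z = lam then deriv f lam else (f z - f lam) / (z - lam))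
  else 0

/-- The reflected model of the shift `S⁻` on `H₀(ℂ ∖ 𝔻̄)`: a function `h` on `{|ζ|>1}`
vanishing at `∞` is represented by `k(w) = h(1/w)` (holomorphic on `𝔻`, `k 0 = 0`);
`S⁻` corresponds to `k ↦ (k(z) - k(0))/z - k'(0)·1`. -/
def negShiftF (k : ℂ → ℂ) : ℂ → ℂ := fun z => fdivB 0 k z - deriv k 0 * oneD z

/-- `n`-th Taylor coefficient at the origin. -/
def tCoeff (n : ℕ) (f : ℂ → ℂ) : ℂ := iteratedDeriv n f 0 / (Nat.factorial n)

/-!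
Write `π : E → E/M`, `A = π ∘ (S - λ)` and `B = π ∘ (S - μ) = A - (μ - λ) π`. When `E` itself has
the division property at `a`, a function of `E` vanishing at `a` is `(S - a) g` with `g = f_a ∈ E`,
so `M` has the division property at `a` exactly when `ker (π ∘ (S - a)) ⊆ ker π`. A nonzero `M` with
this property contains a function `h` with `h(a) ≠ 0`, since otherwise one could divide by `z - a`
indefinitely; subtracting multiples of `h` then shows that `π ∘ (S - a)` is onto.
From `U_λ ∘ A = π` one gets `(I - (μ - λ) U_λ) ∘ A = B`, and the claims become linear algebra.
Invertibility of `I - aT` gives `E` the division property at `a`, because `f_a = (I - aT)⁻¹ T f`.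
-/

section LinearAlgebra

variable {R X Y : Type*} [CommRing R] [AddCommGroup X] [Module R X] [AddCommGroup Y] [Module R Y]
  {p A : X →ₗ[R] Y} {U : Y →ₗ[R] Y} {c : R}

theorem id_sub_smul_comp_of_comp_eq (hUA : U ∘ₗ A = p) :
    (LinearMap.id - c • U) ∘ₗ A = A - c • p := by
  rw [LinearMap.sub_comp, LinearMap.id_comp, LinearMap.smul_comp, hUA]

theorem ker_sub_smul_le_ker_iff_injective (hUA : U ∘ₗ A = p) (hA : Function.Surjective A) :
    LinearMap.ker (A - c • p) ≤ LinearMap.ker p ↔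
      Function.Injective (LinearMap.id - c • U : Y →ₗ[R] Y) := by
  have hV : ∀ x, (LinearMap.id - c • U : Y →ₗ[R] Y) (A x) = (A - c • p) x :=
    LinearMap.congr_fun (id_sub_smul_comp_of_comp_eq hUA)
  constructor
  · intro hker
    rw [injective_iff_map_eq_zero]
    intro y hy
    obtain ⟨x, rfl⟩ := hA y
    have hB : (A - c • p) x = 0 := (hV x).symm.trans hy
    have hp : p x = 0 := hker hB
    simpa [hp] using hB
  · intro hinj x hB
    have hAx : A x = 0 := (injective_iff_map_eq_zero _).1 hinj _ ((hV x).trans hB)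
    rw [LinearMap.mem_ker, ← hUA, LinearMap.comp_apply, hAx, map_zero]

theorem surjective_id_sub_smul (hUA : U ∘ₗ A = p) (hB : Function.Surjective (A - c • p)) :
    Function.Surjective (LinearMap.id - c • U : Y →ₗ[R] Y) := by
  rw [← id_sub_smul_comp_of_comp_eq hUA, LinearMap.coe_comp] at hB
  exact hB.of_comp

theorem exists_comp_sub_smul_eq (hUA : U ∘ₗ A = p)
    (hV : Function.Bijective (LinearMap.id - c • U : Y →ₗ[R] Y)) :
    ∃ W : Y →ₗ[R] Y, W ∘ₗ (A - c • p) = p ∧ W ∘ₗ (LinearMap.id - c • U) = U := by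
  let V := LinearEquiv.ofBijective _ hV
  have hW : (U ∘ₗ V.symm.toLinearMap) ∘ₗ (LinearMap.id - c • U) = U :=
    LinearMap.ext fun y => congrArg U (V.symm_apply_apply y)
  refine ⟨U ∘ₗ V.symm.toLinearMap, ?_, hW⟩
  rw [← id_sub_smul_comp_of_comp_eq hUA, ← LinearMap.comp_assoc, hW, hUA]

end LinearAlgebra

section Division

variable {a : ℂ} {f g : ℂ → ℂ}

theorem sub_mul_fdivB {z : ℂ} (hz : z ∈ ball (0 : ℂ) 1) (a : ℂ) (f : ℂ → ℂ) :
    (z - a) * fdivB a f z = f z - f a := by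
  by_cases hza : z = a
  · simp [hza]
  · rw [fdivB, if_pos hz, if_neg hza, mul_div_cancel₀ _ (sub_ne_zero.2 hza)]

theorem fdivB_eq_of_sub_eq_mul (ha : a ∈ ball (0 : ℂ) 1) (hg : g ∈ HolDisc)
    (hfg : ∀ z ∈ ball (0 : ℂ) 1, f z - f a = (z - a) * g z) : fdivB a f = g := by
  funext z
  by_cases hz : z ∈ ball (0 : ℂ) 1
  · obtain rfl | hza := eq_or_ne z a
    · have hball := isOpen_ball.mem_nhds ha
      have hderiv : HasDerivAt (fun w => (w - z) * g w + f z) (g z) z := by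
        simpa using (((hasDerivAt_id z).sub_const z).mul
          (hg.1.differentiableAt hball).hasDerivAt).add_const (f z)
      have hf : f =ᶠ[𝓝 z] fun w => (w - z) * g w + f z := by
        filter_upwards [hball] with w hw
        rw [← hfg w hw, sub_add_cancel]
      rw [fdivB, if_pos hz, if_pos rfl, (hderiv.congr_of_eventuallyEq hf).deriv]
    · exact mul_left_cancel₀ (sub_ne_zero.2 hza) ((sub_mul_fdivB hz a f).trans (hfg z hz))
  · rw [fdivB, if_neg hz, hg.2 z hz]

theorem eq_zero_of_analyticOrderAt_eq_top (ha : a ∈ ball (0 : ℂ) 1) (hf : f ∈ HolDisc)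
    (htop : analyticOrderAt f a = ⊤) : f = 0 := by
  have hzero : EqOn f 0 (ball 0 1) :=
    (hf.1.analyticOnNhd isOpen_ball).eqOn_zero_of_preconnected_of_eventuallyEq_zero
      (convex_ball 0 1).isPreconnected ha (analyticOrderAt_eq_top.1 htop)
  funext z
  by_cases hz : z ∈ ball (0 : ℂ) 1
  · exact hzero hz
  · exact hf.2 z hz

/-- The division property of a space of functions `M` at the point `a`: zeros at `a` can be divided
out within `M`. -/
def HasDivisionAt (M : Submodule ℂ (ℂ → ℂ)) (a : ℂ) : Prop :=
  ∀ f ∈ M, f a = 0 → fdivB a f ∈ M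

theorem HasDivisionAt.exists_apply_ne_zero {M : Submodule ℂ (ℂ → ℂ)} (hM : HasDivisionAt M a)
    (hMhol : (M : Set (ℂ → ℂ)) ⊆ HolDisc) (ha : a ∈ ball (0 : ℂ) 1) (hM0 : M ≠ ⊥) :
    ∃ h ∈ M, h a ≠ 0 := by
  by_contra! hvanish
  have hball := isOpen_ball.mem_nhds ha
  have hanalytic : ∀ f ∈ M, AnalyticAt ℂ f a := fun f hf => (hMhol hf).1.analyticAt hball
  have horder : ∀ n : ℕ, ∀ f ∈ M, (n : ℕ∞) ≤ analyticOrderAt f a := by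
    intro n
    induction n with
    | zero => exact fun f _ => zero_le
    | succ n ih =>
      intro f hf
      have hdivf : fdivB a f ∈ M := hM f hf (hvanish f hf)
      have hfactor : f =ᶠ[𝓝 a] (fun z => z - a) * fdivB a f := by
        filter_upwards [hball] with z hz
        rw [Pi.mul_apply, sub_mul_fdivB hz, hvanish f hf, sub_zero]
      have hlinear : (1 : ℕ∞) ≤ analyticOrderAt (fun z => z - a) a :=
        Order.one_le_iff_ne_zero.2 (analyticOrderAt_ne_zero.2 ⟨by fun_prop, sub_self a⟩)
      rw [analyticOrderAt_congr hfactor, analyticOrderAt_mul (by fun_prop) (hanalytic _ hdivf),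
        Nat.cast_succ, add_comm]
      exact add_le_add hlinear (ih _ hdivf)
  refine hM0 ((Submodule.eq_bot_iff M).2 fun f hf => ?_)
  exact eq_zero_of_analyticOrderAt_eq_top ha (hMhol hf)
    (ENat.eq_top_iff_forall_ge.2 fun n => horder n f hf)

end Division

section Quotient

variable {E M : Submodule ℂ (ℂ → ℂ)} {a : ℂ}

theorem fdivB_mem_of_surjective_id_sub_smul (hEhol : (E : Set (ℂ → ℂ)) ⊆ HolDisc)
    {T : E →ₗ[ℂ] E} (hT : ∀ f : E, (T f : ℂ → ℂ) = fdivB 0 f) (ha : a ∈ ball (0 : ℂ) 1)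
    (hsurj : Function.Surjective (LinearMap.id - a • T : E →ₗ[ℂ] E)) {f : ℂ → ℂ} (hf : f ∈ E) :
    fdivB a f ∈ E := by
  obtain ⟨g, hg⟩ := hsurj (T ⟨f, hf⟩)
  have hresolvent : ∀ z, g.1 z - a * fdivB 0 g z = fdivB 0 f z := by
    intro z
    simpa [hT] using congrFun (congrArg Subtype.val hg) z
  have hshift : ∀ z ∈ ball (0 : ℂ) 1, z * g.1 z - a * (g.1 z - g.1 0) = f z - f 0 := by
    intro z hz
    rw [← sub_mul_fdivB hz, ← sub_mul_fdivB hz, ← hresolvent]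
    ring
  have hquot : fdivB a f = g :=
    fdivB_eq_of_sub_eq_mul ha (hEhol g.2) fun z hz => by
      linear_combination hshift a ha - hshift z hz
  exact hquot ▸ g.2

/-- The operator `S - a` on a `z`-invariant subspace `E`. -/
def shiftSub (hES : ∀ f ∈ E, shiftL f ∈ E) (a : ℂ) : E →ₗ[ℂ] E :=
  shiftL.restrict hES - a • LinearMap.id

variable (hES : ∀ f ∈ E, shiftL f ∈ E)

theorem shiftSub_apply (g : E) (z : ℂ) : (shiftSub hES a g : ℂ → ℂ) z = (z - a) * g.1 z := by
  simp [shiftSub, shiftL, sub_mul]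

theorem mkQ_comp_shiftSub (l m : ℂ) :
    (M.comap E.subtype).mkQ ∘ₗ shiftSub hES m =
      (M.comap E.subtype).mkQ ∘ₗ shiftSub hES l - (m - l) • (M.comap E.subtype).mkQ := by
  rw [← LinearMap.comp_id (M.comap E.subtype).mkQ, LinearMap.comp_assoc, LinearMap.comp_assoc,
    ← LinearMap.comp_smul, ← LinearMap.comp_sub, LinearMap.id_comp, LinearMap.id_comp]
  congr 1
  unfold shiftSub
  module

theorem fdivB_shiftSub (hEhol : (E : Set (ℂ → ℂ)) ⊆ HolDisc) (ha : a ∈ ball (0 : ℂ) 1) (g : E) :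
    fdivB a (shiftSub hES a g) = g :=
  fdivB_eq_of_sub_eq_mul ha (hEhol g.2) fun z _ => by simp only [shiftSub_apply]; ring

theorem HasDivisionAt.exists_shiftSub_eq (hE : HasDivisionAt E a)
    (hEhol : (E : Set (ℂ → ℂ)) ⊆ HolDisc) {f : E} (hfa : f.1 a = 0) :
    ∃ g : E, shiftSub hES a g = f := by
  refine ⟨⟨fdivB a f, hE f f.2 hfa⟩, Subtype.ext (funext fun z => ?_)⟩
  rw [shiftSub_apply]
  by_cases hz : z ∈ ball (0 : ℂ) 1
  · rw [sub_mul_fdivB hz, hfa, sub_zero]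
  · simp only [fdivB, if_neg hz, mul_zero, (hEhol f.2).2 z hz]

theorem HasDivisionAt.hasDivisionAt_iff_ker_le (hE : HasDivisionAt E a)
    (hEhol : (E : Set (ℂ → ℂ)) ⊆ HolDisc) (hME : M ≤ E) (ha : a ∈ ball (0 : ℂ) 1) :
    HasDivisionAt M a ↔
      LinearMap.ker ((M.comap E.subtype).mkQ ∘ₗ shiftSub hES a) ≤
        LinearMap.ker (M.comap E.subtype).mkQ := by
  rw [LinearMap.ker_comp, Submodule.ker_mkQ]
  constructor
  · intro hM g hg
    have hdiv := hM _ hg (by simp [shiftSub_apply])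
    rwa [Submodule.subtype_apply, fdivB_shiftSub hES hEhol ha] at hdiv
  · intro hker f hf hfa
    obtain ⟨g, hg⟩ := hE.exists_shiftSub_eq hES hEhol (f := ⟨f, hME hf⟩) hfa
    have hgM : g.1 ∈ M := hker (show (shiftSub hES a g).1 ∈ M from hg ▸ hf)
    rwa [← fdivB_shiftSub hES hEhol ha g, hg] at hgM

theorem HasDivisionAt.surjective_mkQ_comp_shiftSub (hE : HasDivisionAt E a) (hM : HasDivisionAt M a)
    (hEhol : (E : Set (ℂ → ℂ)) ⊆ HolDisc) (hME : M ≤ E) (hM0 : M ≠ ⊥) (ha : a ∈ ball (0 : ℂ) 1) :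
    Function.Surjective ((M.comap E.subtype).mkQ ∘ₗ shiftSub hES a) := by
  intro x
  obtain ⟨h, hhM, hha⟩ := hM.exists_apply_ne_zero (fun f hf => hEhol (hME hf)) ha hM0
  obtain ⟨f, rfl⟩ := (M.comap E.subtype).mkQ_surjective x
  let k : E := (f.1 a / h a) • ⟨h, hME hhM⟩
  have hkM : k ∈ M.comap E.subtype := M.smul_mem _ hhM
  obtain ⟨g, hg⟩ := hE.exists_shiftSub_eq hES hEhol (f := f - k) (by simp [k, hha])
  refine ⟨g, ?_⟩
  rw [LinearMap.comp_apply, hg, map_sub, Submodule.mkQ_apply _ k,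
    (Submodule.Quotient.mk_eq_zero _).2 hkM, sub_zero]

end Quotient

theorem statement4_general {E M : Submodule ℂ (ℂ → ℂ)} (hEhol : (E : Set (ℂ → ℂ)) ⊆ HolDisc)
    (hES : ∀ f ∈ E, shiftL f ∈ E) (hME : M ≤ E) (hM0 : M ≠ ⊥)
    {lam mu : ℂ} (hlam : lam ∈ ball (0 : ℂ) 1) (hmu : mu ∈ ball (0 : ℂ) 1)
    (hElam : HasDivisionAt E lam) (hEmu : HasDivisionAt E mu)
    {U : (E ⧸ M.comap E.subtype) →ₗ[ℂ] (E ⧸ M.comap E.subtype)}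
    (hU : U ∘ₗ (M.comap E.subtype).mkQ ∘ₗ shiftSub hES lam = (M.comap E.subtype).mkQ) :
    (HasDivisionAt M mu ↔ Function.Injective (LinearMap.id - (mu - lam) • U : _ →ₗ[ℂ] _)) ∧
      (HasDivisionAt M mu →
        Function.Bijective (LinearMap.id - (mu - lam) • U : _ →ₗ[ℂ] _) ∧
          ∃ Umu : (E ⧸ M.comap E.subtype) →ₗ[ℂ] (E ⧸ M.comap E.subtype),
            Umu ∘ₗ (M.comap E.subtype).mkQ ∘ₗ shiftSub hES mu = (M.comap E.subtype).mkQ ∧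
              Umu ∘ₗ (LinearMap.id - (mu - lam) • U) = U) := by
  have hMlam : HasDivisionAt M lam :=
    (hElam.hasDivisionAt_iff_ker_le hES hEhol hME hlam).2
      ((LinearMap.ker_le_ker_comp _ U).trans_eq (congrArg LinearMap.ker hU))
  have hinj : HasDivisionAt M mu ↔
      Function.Injective (LinearMap.id - (mu - lam) • U : _ →ₗ[ℂ] _) := by
    rw [hEmu.hasDivisionAt_iff_ker_le hES hEhol hME hmu, mkQ_comp_shiftSub hES lam mu]
    exact ker_sub_smul_le_ker_iff_injective hU
      (hElam.surjective_mkQ_comp_shiftSub hES hMlam hEhol hME hM0 hlam)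
  refine ⟨hinj, fun hMmu => ?_⟩
  have hsurj := hEmu.surjective_mkQ_comp_shiftSub hES hMmu hEhol hME hM0 hmu
  rw [mkQ_comp_shiftSub hES lam mu] at hsurj ⊢
  have hbij : Function.Bijective (LinearMap.id - (mu - lam) • U : _ →ₗ[ℂ] _) :=
    ⟨hinj.1 hMmu, surjective_id_sub_smul hU hsurj⟩
  exact ⟨hbij, exists_comp_sub_smul_eq hU hbij⟩

/-- (Proposition 2.5 (iv)) -/
theorem statement4
    (E M : Submodule ℂ (ℂ → ℂ))
    (hEhol : (E : Set (ℂ → ℂ)) ⊆ HolDisc) (hE0 : E ≠ ⊥)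
    (hES : ∀ f ∈ E, shiftL f ∈ E)
    (TE : ↥E →ₗ[ℂ] ↥E) (hTE : ∀ f : ↥E, (↑(TE f) : ℂ → ℂ) = fdivB 0 ↑f)
    (hbij : ∀ μ ∈ Metric.ball (0:ℂ) 1,
      Function.Bijective ((LinearMap.id : ↥E →ₗ[ℂ] ↥E) - μ • TE))
    (hME : M ≤ E) (hM0 : M ≠ ⊥) (hMne : M ≠ E)
    (lam : ℂ) (hlam : lam ∈ Metric.ball (0:ℂ) 1)
    -- M has the division property at λ, with U_λ = U onto satisfying U ∘ π ∘ (S|E - λ) = π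
    (hdiv : ∀ f ∈ M, f lam = 0 → fdivB lam f ∈ M)
    (U : (↥E ⧸ M.comap E.subtype) →ₗ[ℂ] (↥E ⧸ M.comap E.subtype))
    (hU : ∀ f : ↥E,
      U ((M.comap E.subtype).mkQ (shiftL.restrict hES f - lam • f)) =
        (M.comap E.subtype).mkQ f)
    (hUonto : Function.Surjective U)
    (mu : ℂ) (hmu : mu ∈ Metric.ball (0:ℂ) 1) :
    -- M has the division property at μ iff I - (μ-λ)U is one-to-one
    ((∀ f ∈ M, f mu = 0 → fdivB mu f ∈ M) ↔
      Function.Injective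
        ⇑((LinearMap.id : (↥E ⧸ M.comap E.subtype) →ₗ[ℂ] (↥E ⧸ M.comap E.subtype))
            - (mu - lam) • U))
    -- and in this case I - (μ-λ)U is a bijection and U_μ = U_λ ∘ (I - (μ-λ)U_λ)⁻¹
    ∧ ((∀ f ∈ M, f mu = 0 → fdivB mu f ∈ M) →
        Function.Bijective
          ⇑((LinearMap.id : (↥E ⧸ M.comap E.subtype) →ₗ[ℂ] (↥E ⧸ M.comap E.subtype))
              - (mu - lam) • U)
        ∧ ∃ Umu : (↥E ⧸ M.comap E.subtype) →ₗ[ℂ] (↥E ⧸ M.comap E.subtype),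
            (∀ f : ↥E,
              Umu ((M.comap E.subtype).mkQ (shiftL.restrict hES f - mu • f)) =
                (M.comap E.subtype).mkQ f)
            ∧ Umu ∘ₗ ((LinearMap.id : (↥E ⧸ M.comap E.subtype) →ₗ[ℂ]
                (↥E ⧸ M.comap E.subtype)) - (mu - lam) • U) = U) := by
  have hE : ∀ a ∈ ball (0 : ℂ) 1, HasDivisionAt E a := fun a ha _ hf _ =>
    fdivB_mem_of_surjective_id_sub_smul hEhol hTE ha (hbij a ha).2 hf
  obtain ⟨hinj, hUmu⟩ := statement4_general hEhol hES hME hM0 hlam hmu (hE lam hlam) (hE mu hmu)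
    (U := U) (LinearMap.ext hU)
  refine ⟨hinj, fun hMmu => ?_⟩
  obtain ⟨hV, Umu, hUmu_shift, hUmu_comp⟩ := hUmu hMmu
  exact ⟨hV, Umu, LinearMap.congr_fun hUmu_shift, hUmu_comp⟩
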